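/- Assume r, r': {0,1}* → {0,1}* are κ-eventually definable and κ'-eventually definable, respectively, that κ'(r(x)) ≤ f(κ(x)) for some computable f: ℕ → ℕ, and that r is honest. Then r' ∘ r is κ-eventually definable. (Lemma 3.3) -/

import Mathlib

/-! # Framework: strings, pairing, Turing machines, circuits, complexity classes -/

namespace PFW

/-- Binary strings `{0,1}*`. -/
abbrev Str := List Bool

/-- The string `1^n`. -/
def unary (n : ℕ) : Str := List.replicate n true

/-- The binary representation of a natural number, as a string. -/
def natStr (n : ℕ) : Str := Nat.bits n

/-- `num(x)`: the natural number whose binary expansion is `1x`. -/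
def strNum (x : Str) : ℕ := x.foldl (fun a b => 2 * a + cond b 1 0) 1

/-- Duplicate every bit. -/
def dbl (x : Str) : Str := x.foldr (fun b r => b :: b :: r) []

/-- The pairing `⟨x,y⟩ = x₀x₀…x_{|x|-1}x_{|x|-1} 01 y₀y₀…y_{|y|-1}y_{|y|-1}`. -/
def pairStr (x y : Str) : Str := dbl x ++ [false, true] ++ dbl y

/-- Inverse of bit duplication. -/
def undbl : Str → Option Str
  | [] => some []
  | [_] => none
  | a :: b :: r => if a = b then (undbl r).map (a :: ·) else none

/-- Parse a string of the form `⟨x,y⟩` into `(x, y)`. -/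
def splitPair : Str → Option (Str × Str)
  | [] => none
  | [_] => none
  | a :: b :: r =>
    if a = b then (splitPair r).map (fun p => (a :: p.1, p.2))
    else if a = false then (undbl r).map (fun y => (([] : Str), y))
    else none

/-- The parameterization mapping a string of the form `⟨1^n, y⟩` to `|y|`
    and all other strings to `0`. -/
def tallyFstParam (x : Str) : ℕ :=
  match splitPair x with
  | some (u, y) => if u.all (fun b => b) then y.length else 0
  | none => 0

/-! ## Turing machines (single tape, alphabet {0,1} plus blank) -/

/-- Head movements. -/
inductive Move where
  | L | R | S
deriving DecidableEq

def Move.apply : Move → ℤ → ℤ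
  | .L, p => p - 1
  | .R, p => p + 1
  | .S, p => p

/-- A transition: in state `src` reading `read`, go to state `dst`,
    write `write` and move the head. -/
structure MTrans where
  src : ℕ
  read : Option Bool
  dst : ℕ
  write : Option Bool
  move : Move

/-- A nondeterministic Turing machine (start state `0`). -/
structure NTM where
  states : ℕ
  accept : ℕ
  trans : List MTrans

/-- A configuration: state, head position and tape content. -/
structure Cfg where
  state : ℕ
  pos : ℤ
  tape : ℤ → Option Bool

/-- The tape holding input `x`. -/
def inputTape (x : Str) : ℤ → Option Bool :=
  fun i => if 0 ≤ i ∧ i < (x.length : ℤ) then x[i.toNat]? else none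

/-- The start configuration on input `x`. -/
def initCfg (x : Str) : Cfg := ⟨0, 0, inputTape x⟩

/-- One computation step. -/
def NTM.Step (M : NTM) (c c' : Cfg) : Prop :=
  ∃ t ∈ M.trans, t.src = c.state ∧ t.read = c.tape c.pos ∧
    c' = ⟨t.dst, t.move.apply c.pos, Function.update c.tape c.pos t.write⟩

/-- `f` is a run of length `n` of `M`. -/
def NTM.RunFrom (M : NTM) (f : ℕ → Cfg) (n : ℕ) : Prop := ∀ i < n, M.Step (f i) (f (i + 1))

/-- `M` accepts input `x` in exactly `n` steps. -/
def NTM.AcceptsExactly (M : NTM) (x : Str) (n : ℕ) : Prop :=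
  ∃ f : ℕ → Cfg, f 0 = initCfg x ∧ M.RunFrom f n ∧ (f n).state = M.accept

/-- `M` accepts input `x` in at most `n` steps. -/
def NTM.AcceptsIn (M : NTM) (x : Str) (n : ℕ) : Prop := ∃ m ≤ n, M.AcceptsExactly x m

/-- `M` is deterministic. -/
def NTM.Deterministic (M : NTM) : Prop := ∀ c c₁ c₂, M.Step c c₁ → M.Step c c₂ → c₁ = c₂

/-- Binary encoding of a machine. -/
def Move.code : Move → ℕ | .L => 0 | .R => 1 | .S => 2

def MTrans.code (t : MTrans) : ℕ :=
  Encodable.encode (t.src, t.read, t.dst, t.write, t.move.code)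

def NTM.code (M : NTM) : Str :=
  natStr (Encodable.encode (M.states, M.accept, M.trans.map MTrans.code))

/-- `|M|`, the size of a machine. -/
def NTM.size (M : NTM) : ℕ := M.code.length

/-- A deterministic machine computes output `y` from input `x` in `t` steps:
    it halts in the accepting state, head at position 0, with `y` on the tape. -/
def NTM.ComputesIn (M : NTM) (x y : Str) (t : ℕ) : Prop :=
  ∃ f : ℕ → Cfg, f 0 = initCfg x ∧ M.RunFrom f t ∧ (f t).state = M.accept ∧
    (f t).pos = 0 ∧ (f t).tape = inputTape y

/-- `F` is computable in polynomial time. -/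
def PolyTimeFun (F : Str → Str) : Prop :=
  ∃ M : NTM, M.Deterministic ∧ ∃ c : ℕ,
    ∀ x : Str, ∃ t ≤ c * (x.length + 1) ^ c, M.ComputesIn x (F x) t

/-- A parameterization `κ : {0,1}* → ℕ` is polynomial time computable
    (the value is produced in binary). -/
def PolyTimeParam (κ : Str → ℕ) : Prop := PolyTimeFun (fun x => natStr (κ x))

/-! ## Classical complexity classes -/

/-- `Q ∈ NP`. -/
def InNP (Q : Set Str) : Prop :=
  ∃ M : NTM, ∃ c : ℕ, ∀ x : Str, x ∈ Q ↔ M.AcceptsIn x (c * (x.length + 1) ^ c)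

/-- `Q ∈ NE`: nondeterministic time `2^{O(n)}`. -/
def InNE (Q : Set Str) : Prop :=
  ∃ M : NTM, ∃ c : ℕ, ∀ x : Str, x ∈ Q ↔ M.AcceptsIn x (2 ^ (c * (x.length + 1)))

/-- `Q ∈ E`: deterministic time `2^{O(n)}`. -/
def InE (Q : Set Str) : Prop :=
  ∃ M : NTM, M.Deterministic ∧ ∃ c : ℕ, ∀ x : Str, x ∈ Q ↔ M.AcceptsIn x (2 ^ (c * (x.length + 1)))

/-! ## Alternating machines and the linear time hierarchy -/

/-- An alternating Turing machine: a machine together with a labelling of the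
    states as universal (`true`) or existential (`false`). -/
structure ATM where
  toNTM : NTM
  universal : ℕ → Bool

/-- `M.Acc t a c`: starting from configuration `c`, the alternating machine `M`
    accepts within `t` steps using at most `a` alternations. -/
def ATM.Acc (M : ATM) : ℕ → ℕ → Cfg → Prop
  | 0, _, c => c.state = M.toNTM.accept
  | t + 1, a, c =>
    c.state = M.toNTM.accept ∨
      (if M.universal c.state then
        (∃ c', M.toNTM.Step c c') ∧
          ∀ c', M.toNTM.Step c c' →
            (if M.universal c'.state = M.universal c.state then ATM.Acc M t a c'
             else a ≠ 0 ∧ ATM.Acc M t (a - 1) c')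
       else
        ∃ c', M.toNTM.Step c c' ∧
          (if M.universal c'.state = M.universal c.state then ATM.Acc M t a c'
           else a ≠ 0 ∧ ATM.Acc M t (a - 1) c'))

/-- `Q` is accepted by an alternating machine in linear time with
    at most `a` alternations. -/
def InLINHBounded (a : ℕ) (Q : Set Str) : Prop :=
  ∃ M : ATM, ∃ c : ℕ, ∀ x : Str, x ∈ Q ↔ M.Acc (c * (x.length + 1)) a (initCfg x)

/-- `Q ∈ LINH`: the linear time hierarchy. -/
def InLINH (Q : Set Str) : Prop := ∃ a : ℕ, InLINHBounded a Q

/-! ## Space bounded machines (read-only input tape plus a work tape) -/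

structure OTrans where
  src : ℕ
  readIn : Option Bool
  readWork : Option Bool
  dst : ℕ
  moveIn : Move
  writeWork : Option Bool
  moveWork : Move

/-- A (nondeterministic) machine with a read-only input tape and one work tape. -/
structure OTM where
  states : ℕ
  accept : ℕ
  trans : List OTrans

structure OCfg where
  state : ℕ
  inPos : ℤ
  workPos : ℤ
  work : ℤ → Option Bool

def OTM.Step (M : OTM) (x : Str) (c c' : OCfg) : Prop :=
  ∃ t ∈ M.trans, t.src = c.state ∧ t.readIn = inputTape x c.inPos ∧
    t.readWork = c.work c.workPos ∧
    c' = ⟨t.dst, t.moveIn.apply c.inPos, t.moveWork.apply c.workPos,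
          Function.update c.work c.workPos t.writeWork⟩

def OTM.initCfg : OCfg := ⟨0, 0, 0, fun _ => none⟩

/-- `M` accepts `x` using work space at most `s`. -/
def OTM.AcceptsSpace (M : OTM) (x : Str) (s : ℕ) : Prop :=
  ∃ n : ℕ, ∃ f : ℕ → OCfg, f 0 = OTM.initCfg ∧ (∀ i < n, M.Step x (f i) (f (i + 1))) ∧
    (f n).state = M.accept ∧ ∀ i ≤ n, (f i).workPos.natAbs ≤ s

def OTM.Deterministic (M : OTM) : Prop :=
  ∀ x c c₁ c₂, M.Step x c c₁ → M.Step x c c₂ → c₁ = c₂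

/-- `Q ∈ NLINSPACE`. -/
def InNLINSP (Q : Set Str) : Prop :=
  ∃ M : OTM, ∃ c : ℕ, ∀ x : Str, x ∈ Q ↔ M.AcceptsSpace x (c * (x.length + 1))

/-- `Q ∈ LINSPACE`. -/
def InLINSP (Q : Set Str) : Prop :=
  ∃ M : OTM, M.Deterministic ∧ ∃ c : ℕ, ∀ x : Str, x ∈ Q ↔ M.AcceptsSpace x (c * (x.length + 1))

/-! ## Parameterized classes defined by machines -/

/-- `(Q,κ) ∈ para-NP`. -/
def InParaNP (Q : Set Str) (κ : Str → ℕ) : Prop :=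
  PolyTimeParam κ ∧
  ∃ M : NTM, ∃ f : ℕ → ℕ, Computable f ∧ ∃ c : ℕ,
    ∀ x : Str, x ∈ Q ↔ M.AcceptsIn x (f (κ x) * (x.length + 1) ^ c)

/-- `(Q,κ) ∈ FPT = para-P`. -/
def InFPT (Q : Set Str) (κ : Str → ℕ) : Prop :=
  PolyTimeParam κ ∧
  ∃ M : NTM, M.Deterministic ∧ ∃ f : ℕ → ℕ, Computable f ∧ ∃ c : ℕ,
    ∀ x : Str, x ∈ Q ↔ M.AcceptsIn x (f (κ x) * (x.length + 1) ^ c)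

/-- `(Q,κ) ∈ para-NL`: nondeterministic space `f(κ(x)) + O(log |x|)`. -/
def InParaNL (Q : Set Str) (κ : Str → ℕ) : Prop :=
  PolyTimeParam κ ∧
  ∃ M : OTM, ∃ f : ℕ → ℕ, Computable f ∧ ∃ c : ℕ,
    ∀ x : Str, x ∈ Q ↔ M.AcceptsSpace x (f (κ x) + c * (Nat.log 2 (x.length + 1) + 1))

/-- `(Q,κ) ∈ para-L`: deterministic space `f(κ(x)) + O(log |x|)`. -/
def InParaL (Q : Set Str) (κ : Str → ℕ) : Prop :=
  PolyTimeParam κ ∧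
  ∃ M : OTM, M.Deterministic ∧ ∃ f : ℕ → ℕ, Computable f ∧ ∃ c : ℕ,
    ∀ x : Str, x ∈ Q ↔ M.AcceptsSpace x (f (κ x) + c * (Nat.log 2 (x.length + 1) + 1))

/-! ## Circuits -/

/-- A gate of a circuit: an input bit, a constant, or a `¬`, `∧`, `∨` gate
    (with unbounded fan-in for `∧` and `∨`) whose arguments are
    references to previous gates. -/
inductive Gate where
  | input (i : ℕ)
  | const (b : Bool)
  | not (j : ℕ)
  | and (js : List ℕ)
  | or (js : List ℕ)

/-- A circuit is a list of gates, each one referring to earlier gates;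
    its output is the value of the last gate. -/
structure Circuit where
  gates : List Gate

/-- Value of a gate, given the input string and the values of earlier gates. -/
def Gate.val (x : Str) (vs : List Bool) : Gate → Bool
  | .input i => x.getD i false
  | .const b => b
  | .not j => !(vs.getD j false)
  | .and js => js.all fun j => vs.getD j false
  | .or js => js.any fun j => vs.getD j false

def Circuit.vals (C : Circuit) (x : Str) : List Bool :=
  C.gates.foldl (fun vs g => vs ++ [g.val x vs]) []

/-- Evaluate a circuit on an input string. -/
def Circuit.eval (C : Circuit) (x : Str) : Bool := (C.vals x).getLast?.getD false

/-- Depth contribution of a gate (as usual, negations do not count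
    towards the depth). -/
def Gate.dep (ds : List ℕ) : Gate → ℕ
  | .input _ => 0
  | .const _ => 0
  | .not j => ds.getD j 0
  | .and js => (js.map fun j => ds.getD j 0).foldr max 0 + 1
  | .or js => (js.map fun j => ds.getD j 0).foldr max 0 + 1

/-- The depth of a circuit. -/
def Circuit.depth (C : Circuit) : ℕ :=
  (C.gates.foldl (fun ds g => ds ++ [g.dep ds]) []).foldr max 0

def Gate.fanin : Gate → ℕ
  | .and js => js.length
  | .or js => js.length
  | .not _ => 1
  | _ => 0

/-- The size of a circuit: number of gates plus number of wires. -/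
def Circuit.size (C : Circuit) : ℕ := C.gates.length + (C.gates.map Gate.fanin).sum

def Gate.code : Gate → ℕ
  | .input i => Nat.pair 0 i
  | .const b => Nat.pair 1 (cond b 1 0)
  | .not j => Nat.pair 2 j
  | .and js => Nat.pair 3 (Encodable.encode js)
  | .or js => Nat.pair 4 (Encodable.encode js)

/-- The binary encoding of a circuit. -/
def Circuit.code (C : Circuit) : Str := natStr (Encodable.encode (C.gates.map Gate.code))

/-- The input `⟨n, 1^k, i, b⟩` (with `n` and `i` in binary) for the machine
    checking the encoding of the circuit family. -/
def uniInput2 (n k i : ℕ) (b : Bool) : Str :=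
  pairStr (natStr n) (pairStr (unary k) (pairStr (natStr i) [b]))

/-- dlogtime-style uniformity of a parameterized circuit family: a deterministic
    Turing machine decides in time `g(k) + O(log n)` whether the `i`-th bit of
    the binary encoding of `C_{n,k}` is `b`. -/
def UniformFamily2 (C : ℕ → ℕ → Circuit) : Prop :=
  ∃ M : NTM, M.Deterministic ∧ ∃ g : ℕ → ℕ, Computable g ∧ ∃ e : ℕ,
    ∀ n k i b, ((C n k).code[i]? = some b ↔
      M.AcceptsIn (uniInput2 n k i b) (g k + e * (Nat.log 2 (n + 1) + 1)))

/-- `(Q,κ) ∈ para-AC⁰`: a uniform family `(C_{n,k})` of circuits of constant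
    depth and size `f(k)·n^{O(1)}` (`f` computable) deciding `Q`. -/
def InParaAC0 (Q : Set Str) (κ : Str → ℕ) : Prop :=
  PolyTimeParam κ ∧
  ∃ C : ℕ → ℕ → Circuit, ∃ f : ℕ → ℕ, Computable f ∧ ∃ c d : ℕ,
    (∀ n k, (C n k).size ≤ f k * (n + 1) ^ c ∧ (C n k).depth ≤ d) ∧
    (∀ x : Str, x ∈ Q ↔ (C x.length (κ x)).eval x = true) ∧
    UniformFamily2 C

def uniInput1 (n i : ℕ) (b : Bool) : Str := pairStr (natStr n) (pairStr (natStr i) [b])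

/-- dlogtime-style uniformity of a circuit family. -/
def UniformFamily1 (C : ℕ → Circuit) : Prop :=
  ∃ M : NTM, M.Deterministic ∧ ∃ e : ℕ,
    ∀ n i b, ((C n).code[i]? = some b ↔
      M.AcceptsIn (uniInput1 n i b) (e * (Nat.log 2 (n + 1) + 1)))

/-- `Q ∈ AC⁰` (dlogtime uniform). -/
def InAC0 (Q : Set Str) : Prop :=
  ∃ C : ℕ → Circuit, ∃ c d : ℕ,
    (∀ n, (C n).size ≤ (n + 1) ^ c ∧ (C n).depth ≤ d) ∧
    (∀ x : Str, x ∈ Q ↔ (C x.length).eval x = true) ∧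
    UniformFamily1 C

/-- `Q ∈ AC⁰_d`: dlogtime uniform polynomial size circuits of depth at most `d`. -/
def InAC0Depth (d : ℕ) (Q : Set Str) : Prop :=
  ∃ C : ℕ → Circuit, ∃ c : ℕ,
    (∀ n, (C n).size ≤ (n + 1) ^ c ∧ (C n).depth ≤ d) ∧
    (∀ x : Str, x ∈ Q ↔ (C x.length).eval x = true) ∧
    UniformFamily1 C

/-! ## The parameterized halting problems -/

/-- `p-Halt`: instances `⟨1^n, M⟩`, question: does the nondeterministic machine
    `M` accept the empty input in at most `n` steps? -/
def pHaltQ : Set Str :=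
  { z | ∃ (n : ℕ) (M : NTM), z = pairStr (unary n) M.code ∧ ∃ m ≤ n, M.AcceptsExactly [] m }

/-- `p-Halt₌`: instances `⟨1^n, M⟩`, question: does the nondeterministic machine
    `M` accept the empty input in exactly `n` steps? -/
def pHaltEqQ : Set Str :=
  { z | ∃ (n : ℕ) (M : NTM), z = pairStr (unary n) M.code ∧ M.AcceptsExactly [] n }

/-- `p-DHalt`: as `p-Halt` but with deterministic machines. -/
def pDHaltQ : Set Str :=
  { z | ∃ (n : ℕ) (M : NTM), z = pairStr (unary n) M.code ∧ M.Deterministic ∧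
        ∃ m ≤ n, M.AcceptsExactly [] m }

/-- The parameterization `⟨1^n, M⟩ ↦ |M|` of the halting problems. -/
def haltParam : Str → ℕ := tallyFstParam

/-- `(Q,κ)` is almost tally: instances have the form `⟨1^n, x⟩` with `|x|`
    effectively bounded in the parameter. -/
def AlmostTally (Q : Set Str) (κ : Str → ℕ) : Prop :=
  (∀ z ∈ Q, ∃ (n : ℕ) (x : Str), z = pairStr (unary n) x) ∧
  ∃ f : ℕ → ℕ, Computable f ∧ ∀ (n : ℕ) (x : Str), x.length ≤ f (κ (pairStr (unary n) x))

end PFW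

/-! # String structures, the language `L^r_ar ∪ {ONE}`, interpretations -/

namespace PFW

open FirstOrder

/-- Function symbols of `L^r_ar ∪ {ONE}`: the constants `0` and `1`. -/
inductive LOneFun : ℕ → Type
  | zero : LOneFun 0
  | one : LOneFun 0

/-- Relation symbols of `L^r_ar ∪ {ONE}`: the unary `ONE`, the binary `<` and
    the ternary graphs of `+` and `×`. -/
inductive LOneRel : ℕ → Type
  | one : LOneRel 1
  | lt : LOneRel 2
  | add : LOneRel 3
  | mul : LOneRel 3

/-- The relational language `L^r_ar ∪ {ONE}` of string structures. -/
def LOne : FirstOrder.Language := ⟨LOneFun, LOneRel⟩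

/-- The size of the universe of the string structure `S(x)` (we pad to `2` to
    keep the structure total; for `|x| ≥ 2` it is exactly `|x|`). -/
def strLen (x : Str) : ℕ := max x.length 2

theorem two_le_strLen (x : Str) : 2 ≤ strLen x := Nat.le_max_right _ _

/-- The string structure `S(x) = ([n], +^n, ×^n, 0, 1, <, ONE^x)`, `n = |x|`. -/
def strStructure (x : Str) : LOne.Structure (Fin (strLen x)) where
  funMap := fun {n} f _ =>
    match f with
    | .zero => ⟨0, by have := two_le_strLen x; omega⟩
    | .one => ⟨1, by have := two_le_strLen x; omega⟩
  RelMap := fun {n} R v =>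
    match R, v with
    | .one, v => x.getD (v 0).val false = true
    | .lt, v => (v 0).val < (v 1).val
    | .add, v => (v 0).val + (v 1).val = (v 2).val
    | .mul, v => (v 0).val * (v 1).val = (v 2).val

/-- `S(x) ⊨ φ`. -/
def strSat (x : Str) (φ : LOne.Sentence) : Prop :=
  letI := strStructure x
  FirstOrder.Language.Sentence.Realize (Fin (strLen x)) φ

/-- A first-order interpretation (of `L^r_ar ∪ {ONE}` in itself) of width `w`. -/
structure Interp where
  w : ℕ
  uni : LOne.Formula (Fin w)
  addF : LOne.Formula (Fin w ⊕ Fin w ⊕ Fin w)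
  mulF : LOne.Formula (Fin w ⊕ Fin w ⊕ Fin w)
  ltF : LOne.Formula (Fin w ⊕ Fin w)
  oneR : LOne.Formula (Fin w)
  zeroC : LOne.Formula (Fin w)
  oneC : LOne.Formula (Fin w)

/-- The universe defined by the interpretation `I` inside `S(x)`. -/
def Interp.Dom (I : Interp) (x : Str) : Type :=
  { a : Fin I.w → Fin (strLen x) //
      letI := strStructure x
      I.uni.Realize a }

/-- `I.Models x y` says that the interpreted structure `S(x)^I` is defined and
    isomorphic to the string structure `S(y)`. -/
def Interp.Models (I : Interp) (x y : Str) : Prop :=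
  letI := strStructure x
  ∃ e : I.Dom x ≃ Fin (strLen y),
    (∀ u v w : I.Dom x,
       I.addF.Realize (Sum.elim u.1 (Sum.elim v.1 w.1)) ↔
         (e u).val + (e v).val = (e w).val) ∧
    (∀ u v w : I.Dom x,
       I.mulF.Realize (Sum.elim u.1 (Sum.elim v.1 w.1)) ↔
         (e u).val * (e v).val = (e w).val) ∧
    (∀ u v : I.Dom x, I.ltF.Realize (Sum.elim u.1 v.1) ↔ (e u).val < (e v).val) ∧
    (∀ u : I.Dom x, I.oneR.Realize u.1 ↔ y.getD (e u).val false = true) ∧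
    (∀ u : I.Dom x, I.zeroC.Realize u.1 ↔ (e u).val = 0) ∧
    (∀ u : I.Dom x, I.oneC.Realize u.1 ↔ (e u).val = 1)

/-- `r` is `κ`-eventually definable: for some computable `h` and some
    interpretation `I`, `S(x)^I ≅ S(r(x))` whenever `|x| ≥ h(κ(x))`. -/
def EventuallyDefinable (κ : Str → ℕ) (r : Str → Str) : Prop :=
  ∃ h : ℕ → ℕ, Computable h ∧ ∃ I : Interp,
    ∀ x : Str, h (κ x) ≤ x.length → I.Models x (r x)

/-- `r` is honest: `|r(x)| ≥ |x|^{Ω(1)}`. -/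
def Honest (r : Str → Str) : Prop :=
  ∃ (c n₀ : ℕ), 0 < c ∧ ∀ x : Str, n₀ ≤ x.length → x.length ≤ (r x).length ^ c

/-- An eventually definable reduction from `(Q,κ)` to `(Q',κ')`: a reduction
    which is honest, parameterized, and `κ`-eventually definable. -/
def EDReduction (Q : Set Str) (κ : Str → ℕ) (Q' : Set Str) (κ' : Str → ℕ)
    (r : Str → Str) : Prop :=
  (∀ x : Str, x ∈ Q ↔ r x ∈ Q') ∧
  Honest r ∧
  (∃ f : ℕ → ℕ, Computable f ∧ ∀ x : Str, κ' (r x) ≤ f (κ x)) ∧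
  EventuallyDefinable κ r

/-- `(Q,κ)` is eventually definable: for some computable `h` and first-order
    sentence `φ` of `L^r_ar ∪ {ONE}`, for all `x` with `|x| ≥ h(κ(x))` (and
    `|x| ≥ 2`): `x ∈ Q ⟺ S(x) ⊨ φ`. -/
def EventuallyDefinableProblem (Q : Set Str) (κ : Str → ℕ) : Prop :=
  ∃ h : ℕ → ℕ, Computable h ∧ ∃ φ : LOne.Sentence,
    ∀ x : Str, 2 ≤ x.length → h (κ x) ≤ x.length → (x ∈ Q ↔ strSat x φ)

end PFW

namespace PFW

/-!
Interpretations compose: a formula about the structure `T` defines inside `M` is translated to a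
formula about `M` by replacing each variable by a tuple of variables and relativising the
quantifiers to the domain of `T`. Translating the defining formulas of `T'` along `T` defines
`(M^T)^{T'}` inside `M`, where the tuples of `T'` consist of tuples of `T`.

For the eventual part, `|r x|` must exceed the threshold `h' (κ' (r x))` of `r'`. This threshold is
bounded by a computable function of `κ x`, because `h'` may be taken monotone, and honesty makes
`r x` long enough once `x` is long relative to that bound.
-/

section Interpretation

open FirstOrder
open FirstOrder.Language (BoundedFormula Formula Structure Term)

theorem exists_forall_eq_apply_and {α β γ : Type*} (e : α ≃ β) (b : γ → β) (p : (γ → β) → Prop) :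
    (∃ a : γ → α, (∀ j, b j = e (a j)) ∧ p (e ∘ a)) ↔ p b :=
  ⟨fun ⟨_, hb, hp⟩ => funext hb ▸ hp, fun hp => ⟨e.symm ∘ b, by simp, by
    rwa [← Function.comp_assoc, e.self_comp_symm, Function.id_comp]⟩⟩

universe u₁ v₁ u₂ v₂ u₃ v₃

/-- A first-order interpretation of the language `L'` in `L`, whose elements are `ι`-tuples and
whose equality is equality of tuples. The variables `α × ι` stand for a family of `ι`-tuples indexed
by `α`; in the formula for the graph of a function, the `Unit` component is the value. -/
structure Interpretation (L : FirstOrder.Language.{u₁, v₁}) (L' : FirstOrder.Language.{u₂, v₂})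
    (ι : Type) where
  dom : L.Formula ι
  fn : ∀ {k : ℕ}, L'.Functions k → L.Formula ((Fin k ⊕ Unit) × ι)
  rel : ∀ {k : ℕ}, L'.Relations k → L.Formula (Fin k × ι)

namespace Interpretation

variable {L : FirstOrder.Language.{u₁, v₁}} {L' : FirstOrder.Language.{u₂, v₂}}
  {L'' : FirstOrder.Language.{u₃, v₃}} {ι ι' α β : Type}

section Domain

variable (T : Interpretation L L' ι)

/-- The universe of the structure that `T` defines inside `M`. -/
abbrev Dom (M : Type*) [L.Structure M] : Type _ := {a : ι → M // T.dom.Realize a}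

variable {T} {M : Type*} [L.Structure M]

/-- The assignment of the variables `α × ι` encoding an `α`-tuple of elements of `T.Dom M`. -/
def coords (u : α → T.Dom M) : α × ι → M := fun p => (u p.1).1 p.2

theorem realize_relabel_coords (φ : L.Formula (α × ι)) (g : α → β) (u : β → T.Dom M) :
    (φ.relabel (Prod.map g id)).Realize (coords u) ↔ φ.Realize (coords (u ∘ g)) :=
  Formula.realize_relabel

theorem sumElim_coords_comp_sumProdDistrib (u : α → T.Dom M) (v : β → T.Dom M) :
    Sum.elim (coords u) (coords v) ∘ Equiv.sumProdDistrib α β ι = coords (Sum.elim u v) := by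
  funext ⟨a, i⟩
  cases a <;> rfl

variable (T) [Finite ι]

/-- The quantifier `∃ v : β → T.Dom M`. -/
noncomputable def exDom (β : Type) [Finite β] (φ : L.Formula ((α ⊕ β) × ι)) : L.Formula (α × ι) :=
  Formula.iExs (β × ι)
    (Formula.iInf (fun j : β => T.dom.relabel fun i => Sum.inr (j, i)) ⊓
      φ.relabel (Equiv.sumProdDistrib α β ι))

theorem realize_exDom [Finite β] (φ : L.Formula ((α ⊕ β) × ι)) (u : α → T.Dom M) :
    (T.exDom β φ).Realize (coords u) ↔ ∃ v : β → T.Dom M, φ.Realize (coords (Sum.elim u v)) := by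
  simp only [exDom, Formula.realize_iExs, Formula.realize_inf, Formula.realize_iInf,
    Formula.realize_relabel]
  constructor
  · rintro ⟨z, hz, hφ⟩
    refine ⟨fun j => ⟨fun i => z (j, i), hz j⟩, ?_⟩
    rwa [← sumElim_coords_comp_sumProdDistrib]
  · rintro ⟨v, hφ⟩
    refine ⟨coords v, fun j => (v j).2, ?_⟩
    rwa [sumElim_coords_comp_sumProdDistrib]

end Domain

section Translation

variable [Finite ι]

/-- The graph of a term in the structure that `T` defines, the `Unit` component being the value. -/
noncomputable def termGraph (T : Interpretation L L' ι) : L'.Term α → L.Formula ((α ⊕ Unit) × ι)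
  | .var a => Formula.iInf fun i => Term.equal (.var (.inl a, i)) (.var (.inr (), i))
  | .func (l := k) f ts =>
      T.exDom (Fin k)
        (Formula.iInf (fun j =>
            (T.termGraph (ts j)).relabel (Prod.map (Sum.map Sum.inl fun _ => j) id)) ⊓
          (T.fn f).relabel (Prod.map (Sum.elim Sum.inr fun _ => .inl (.inr ())) id))

/-- The formula expressing in `M` that `φ` holds in the structure that `T` defines inside `M`. -/
noncomputable def translateBounded (T : Interpretation L L' ι) :
    {n : ℕ} → L'.BoundedFormula α n → L.Formula ((α ⊕ Fin n) × ι)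
  | _, .falsum => ⊥
  | _, .equal t s => T.exDom Unit (T.termGraph t ⊓ T.termGraph s)
  | _, .rel (l := k) R ts =>
      T.exDom (Fin k)
        (Formula.iInf (fun j =>
            (T.termGraph (ts j)).relabel (Prod.map (Sum.map id fun _ => j) id)) ⊓
          (T.rel R).relabel (Prod.map Sum.inr id))
  | _, .imp φ ψ => (T.translateBounded φ).imp (T.translateBounded ψ)
  | n, .all φ =>
      ∼(T.exDom Unit ∼((T.translateBounded φ).relabel
        (Prod.map (Sum.elim (Sum.inl ∘ Sum.inl)
          (Fin.snoc (α := fun _ => (α ⊕ Fin n) ⊕ Unit) (Sum.inl ∘ Sum.inr) (.inr ()))) id)))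

/-- `translateBounded` for formulas without bound variables in scope. -/
noncomputable def translate (T : Interpretation L L' ι) (φ : L'.Formula α) : L.Formula (α × ι) :=
  (T.translateBounded φ).relabel (Prod.map (Sum.elim id finZeroElim) id)

end Translation

variable {T : Interpretation L L' ι} {M N : Type*} [L.Structure M] [L'.Structure N]
  {e : T.Dom M ≃ N}

/-- `e` is an isomorphism from the structure that `T` defines inside `M` onto `N`. -/
structure IsIso (T : Interpretation L L' ι) {M N : Type*} [L.Structure M] [L'.Structure N]
    (e : T.Dom M ≃ N) : Prop where
  realize_fn : ∀ {k : ℕ} (f : L'.Functions k) (u : Fin k ⊕ Unit → T.Dom M),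
    (T.fn f).Realize (coords u) ↔ Structure.funMap f (e ∘ u ∘ Sum.inl) = e (u (.inr ()))
  realize_rel : ∀ {k : ℕ} (R : L'.Relations k) (u : Fin k → T.Dom M),
    (T.rel R).Realize (coords u) ↔ Structure.RelMap R (e ∘ u)

section Realization

variable [Finite ι]

theorem IsIso.realize_termGraph (he : T.IsIso e) (t : L'.Term α) (u : α ⊕ Unit → T.Dom M) :
    (T.termGraph t).Realize (coords u) ↔ t.realize (e ∘ u ∘ Sum.inl) = e (u (.inr ())) := by
  induction t generalizing u with
  | var a => simp [termGraph, coords, Subtype.ext_iff, funext_iff]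
  | func f ts ih =>
    simp only [termGraph, realize_exDom, Formula.realize_inf, Formula.realize_iInf,
      realize_relabel_coords, ih, he.realize_fn, Term.realize_func]
    exact exists_forall_eq_apply_and e (fun j => (ts j).realize (e ∘ u ∘ Sum.inl))
      (Structure.funMap f · = e (u (.inr ())))

theorem IsIso.realize_translateBounded (he : T.IsIso e) {n : ℕ} (φ : L'.BoundedFormula α n)
    (u : α ⊕ Fin n → T.Dom M) :
    (T.translateBounded φ).Realize (coords u) ↔
      φ.Realize (e ∘ u ∘ Sum.inl) (e ∘ u ∘ Sum.inr) := by
  have elim_comp {n : ℕ} (u : α ⊕ Fin n → T.Dom M) :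
      Sum.elim (e ∘ u ∘ Sum.inl) (e ∘ u ∘ Sum.inr) = e ∘ u :=
    Sum.elim_comp_inl_inr (e ∘ u)
  induction φ with
  | falsum => rfl
  | equal t s =>
    simp only [translateBounded, realize_exDom, Formula.realize_inf, he.realize_termGraph,
      BoundedFormula.Realize, elim_comp, Sum.elim_comp_inl, Sum.elim_inr]
    rw [eq_comm]
    simpa only [Unique.forall_iff, PUnit.default_eq_unit, Function.comp_apply] using
      exists_forall_eq_apply_and (γ := Unit) e (fun _ => t.realize (e ∘ u))
        (s.realize (e ∘ u) = · ())
  | rel R ts =>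
    simp only [translateBounded, realize_exDom, Formula.realize_inf, Formula.realize_iInf,
      realize_relabel_coords, he.realize_termGraph, he.realize_rel, BoundedFormula.Realize,
      elim_comp]
    exact exists_forall_eq_apply_and e (fun j => (ts j).realize (e ∘ u)) (Structure.RelMap R)
  | imp φ ψ ihφ ihψ =>
    simp only [translateBounded, Formula.realize_imp, ihφ, ihψ, BoundedFormula.realize_imp]
  | @all n φ ih =>
    have comp_snoc (v : Unit → T.Dom M) :
        e ∘ Sum.elim u v ∘ Fin.snoc (α := fun _ => (α ⊕ Fin n) ⊕ Unit) (Sum.inl ∘ Sum.inr)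
          (.inr ()) = Fin.snoc (e ∘ u ∘ Sum.inr) (e (v ())) := by
      simp only [Fin.comp_snoc]
      rfl
    simp only [translateBounded, Formula.realize_not, realize_exDom, realize_relabel_coords, ih,
      not_exists, not_not, BoundedFormula.realize_all, e.surjective.forall]
    simp only [Function.comp_assoc, Sum.elim_comp_inl, Sum.elim_comp_inr, comp_snoc]
    exact (Equiv.funUnique Unit _).forall_congr_left

theorem IsIso.realize_translate (he : T.IsIso e) (φ : L'.Formula α) (u : α → T.Dom M) :
    (T.translate φ).Realize (coords u) ↔ φ.Realize (e ∘ u) := by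
  rw [translate, realize_relabel_coords, he.realize_translateBounded, Formula.Realize]
  exact iff_of_eq (congrArg _ (Subsingleton.elim _ _))

end Realization

section Composition

variable [Finite ι] [Finite ι']

/-- The composition of interpretations, defining `(M^T)^{T'}` inside `M`. -/
noncomputable def comp (T : Interpretation L L' ι) (T' : Interpretation L' L'' ι') :
    Interpretation L L'' (ι' × ι) where
  dom := Formula.iInf (fun j : ι' => T.dom.relabel (Prod.mk j)) ⊓ T.translate T'.dom
  fn f := (T.translate (T'.fn f)).relabel (Equiv.prodAssoc _ _ _)
  rel R := (T.translate (T'.rel R)).relabel (Equiv.prodAssoc _ _ _)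

theorem realize_comp_dom (T' : Interpretation L' L'' ι') (b : ι' × ι → M) :
    (T.comp T').dom.Realize b ↔
      (∀ j, T.dom.Realize fun i => b (j, i)) ∧ (T.translate T'.dom).Realize b := by
  simp only [comp, Formula.realize_inf, Formula.realize_iInf, Formula.realize_relabel]
  rfl

/-- The elements of `T.Dom M` of which an element of `(T.comp T').Dom M` consists. -/
def components {T' : Interpretation L' L'' ι'} (b : (T.comp T').Dom M) (j : ι') : T.Dom M :=
  ⟨fun i => b.1 (j, i), ((realize_comp_dom T' b.1).1 b.2).1 j⟩

/-- The identification of the universes of `M^(T.comp T')` and `N^T'` induced by `M^T ≃ N`. -/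
def IsIso.compDomEquiv (he : T.IsIso e) (T' : Interpretation L' L'' ι') :
    (T.comp T').Dom M ≃ T'.Dom N where
  toFun b := ⟨e ∘ components b,
    (he.realize_translate T'.dom (components b)).1 ((realize_comp_dom T' b.1).1 b.2).2⟩
  invFun c := ⟨coords (e.symm ∘ c.1), (realize_comp_dom T' _).2
    ⟨fun j => (e.symm (c.1 j)).2, (he.realize_translate T'.dom _).2 (by
      rw [← Function.comp_assoc, e.self_comp_symm, Function.id_comp]
      exact c.2)⟩⟩
  left_inv b := Subtype.ext <| funext fun p =>
    congrFun (congrArg Subtype.val (e.symm_apply_apply (components b p.1))) p.2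
  right_inv c := Subtype.ext <| funext fun j => e.apply_symm_apply (c.1 j)

theorem IsIso.realize_translate_compDomEquiv (he : T.IsIso e) {T' : Interpretation L' L'' ι'}
    (φ : L'.Formula (α × ι')) (u : α → (T.comp T').Dom M) :
    ((T.translate φ).relabel (Equiv.prodAssoc _ _ _)).Realize (coords u) ↔
      φ.Realize (coords (he.compDomEquiv T' ∘ u)) := by
  rw [Formula.realize_relabel]
  exact he.realize_translate φ fun p => components (u p.1) p.2

theorem IsIso.comp (he : T.IsIso e) {T' : Interpretation L' L'' ι'} {P : Type*} [L''.Structure P]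
    {e' : T'.Dom N ≃ P} (he' : T'.IsIso e') :
    (T.comp T').IsIso ((he.compDomEquiv T').trans e') where
  realize_fn f u := (he.realize_translate_compDomEquiv _ u).trans (he'.realize_fn f _)
  realize_rel R u := (he.realize_translate_compDomEquiv _ u).trans (he'.realize_rel R _)

end Composition

end Interpretation

end Interpretation

section StringStructures

open FirstOrder.Language (Formula Structure)

local instance (x : Str) : LOne.Structure (Fin (strLen x)) := strStructure x

variable {ι : Type} {w : ℕ} {x y z : Str}

/-- The formula by which `I` defines a relation symbol, in the variables of `Interpretation.rel`. -/
def Interp.relF (I : Interp) : {k : ℕ} → LOneRel k → LOne.Formula (Fin k × Fin I.w)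
  | _, .one => I.oneR.relabel (Prod.mk 0)
  | _, .lt => I.ltF.relabel (Sum.elim (Prod.mk 0) (Prod.mk 1))
  | _, .add => I.addF.relabel (Sum.elim (Prod.mk 0) (Sum.elim (Prod.mk 1) (Prod.mk 2)))
  | _, .mul => I.mulF.relabel (Sum.elim (Prod.mk 0) (Sum.elim (Prod.mk 1) (Prod.mk 2)))

/-- The formula by which `I` defines a constant, in the variables of `Interpretation.fn`. -/
def Interp.constF (I : Interp) : {k : ℕ} → LOneFun k → LOne.Formula ((Fin k ⊕ Unit) × Fin I.w)
  | _, .zero => I.zeroC.relabel (Prod.mk (.inr ()))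
  | _, .one => I.oneC.relabel (Prod.mk (.inr ()))

/-- An `Interp`, as an interpretation of `LOne` in itself. -/
def Interp.toInterpretation (I : Interp) : Interpretation LOne LOne (Fin I.w) where
  dom := I.uni
  fn := I.constF
  rel := I.relF

theorem Interp.Models.exists_isIso {I : Interp} (h : I.Models x y) :
    ∃ e : I.toInterpretation.Dom (Fin (strLen x)) ≃ Fin (strLen y), I.toInterpretation.IsIso e := by
  obtain ⟨e, hadd, hmul, hlt, hone, hzeroC, honeC⟩ := h
  refine ⟨e, ⟨fun f u => ?_, fun R u => ?_⟩⟩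
  · cases f
    all_goals refine Formula.realize_relabel.trans (Iff.trans ?_ (Fin.ext_iff.symm.trans eq_comm))
    · exact hzeroC (u (.inr ()))
    · exact honeC (u (.inr ()))
  · cases R
    all_goals refine Formula.realize_relabel.trans ?_
    · exact hone (u 0)
    · rw [Sum.comp_elim]
      exact hlt (u 0) (u 1)
    · rw [Sum.comp_elim, Sum.comp_elim]
      exact hadd (u 0) (u 1) (u 2)
    · rw [Sum.comp_elim, Sum.comp_elim]
      exact hmul (u 0) (u 1) (u 2)

/-- The variables of the two tuples in `Interp.ltF`. -/
def pairVar : Fin 2 → Fin w → Fin w ⊕ Fin w :=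
  ![Sum.inl, Sum.inr]

/-- The variables of the three tuples in `Interp.addF` and `Interp.mulF`. -/
def tripleVar : Fin 3 → Fin w → Fin w ⊕ Fin w ⊕ Fin w :=
  ![Sum.inl, Sum.inr ∘ Sum.inl, Sum.inr ∘ Sum.inr]

/-- An interpretation of `LOne` in itself, as an `Interp`. The enumeration `σ` of the coordinates
provides the indexing by `Fin w` on which `Interp` insists. -/
def Interpretation.toInterp (T : Interpretation LOne LOne ι) (σ : ι ≃ Fin w) : Interp where
  w := w
  uni := T.dom.relabel σ
  addF := (T.rel LOneRel.add).relabel fun p => tripleVar p.1 (σ p.2)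
  mulF := (T.rel LOneRel.mul).relabel fun p => tripleVar p.1 (σ p.2)
  ltF := (T.rel LOneRel.lt).relabel fun p => pairVar p.1 (σ p.2)
  oneR := (T.rel LOneRel.one).relabel fun p => σ p.2
  zeroC := (T.fn LOneFun.zero).relabel fun p => σ p.2
  oneC := (T.fn LOneFun.one).relabel fun p => σ p.2

/-- The reindexing along `σ` of the tuples that `T` admits. -/
def Interpretation.domToInterpEquiv (T : Interpretation LOne LOne ι) (σ : ι ≃ Fin w) (x : Str) :
    (T.toInterp σ).Dom x ≃ T.Dom (Fin (strLen x)) :=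
  (Equiv.arrowCongr σ.symm (Equiv.refl _)).subtypeEquiv fun _ => Formula.realize_relabel

theorem Interpretation.realize_relabel_domToInterpEquiv {T : Interpretation LOne LOne ι}
    (σ : ι ≃ Fin w) {α β : Type} (φ : LOne.Formula (α × ι)) {b : α → Fin w → β}
    {v : β → Fin (strLen x)} {u : α → (T.toInterp σ).Dom x} (hv : ∀ a, v ∘ b a = (u a).1) :
    (φ.relabel fun p => b p.1 (σ p.2)).Realize v ↔
      φ.Realize (coords (T.domToInterpEquiv σ x ∘ u)) :=
  Formula.realize_relabel.trans <| iff_of_eq <| congrArg φ.Realize <|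
    funext fun p => congrFun (hv p.1) (σ p.2)

theorem Interpretation.IsIso.models_toInterp {T : Interpretation LOne LOne ι}
    {e : T.Dom (Fin (strLen x)) ≃ Fin (strLen y)} (he : T.IsIso e) (σ : ι ≃ Fin w) :
    (T.toInterp σ).Models x y := by
  set E := (T.domToInterpEquiv σ x).trans e
  have realize_ternary (R : LOneRel 3) (u v w : (T.toInterp σ).Dom x) :
      ((T.rel R).relabel fun p => tripleVar p.1 (σ p.2)).Realize
        (Sum.elim u.1 (Sum.elim v.1 w.1)) ↔ Structure.RelMap (L := LOne) R (E ∘ ![u, v, w]) :=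
    (realize_relabel_domToInterpEquiv (u := ![u, v, w]) σ (T.rel R)
      fun a => by fin_cases a <;> rfl).trans (he.realize_rel R _)
  have realize_const (c : LOneFun 0) (u : (T.toInterp σ).Dom x) :
      ((T.fn c).relabel fun p => σ p.2).Realize u.1 ↔
        E u = Structure.funMap (L := LOne) c finZeroElim := by
    rw [eq_comm, Subsingleton.elim finZeroElim (E ∘ fun _ => u)]
    exact (realize_relabel_domToInterpEquiv (b := fun _ => id) (u := fun _ => u) σ (T.fn c)
      fun _ => rfl).trans (he.realize_fn c _)
  refine ⟨E, realize_ternary .add, realize_ternary .mul, fun u v => ?lt, fun u => ?one,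
    fun u => (realize_const .zero u).trans Fin.ext_iff,
    fun u => (realize_const .one u).trans Fin.ext_iff⟩
  case lt =>
    exact (realize_relabel_domToInterpEquiv (u := ![u, v]) σ (T.rel LOneRel.lt)
      fun a => by fin_cases a <;> rfl).trans (he.realize_rel LOneRel.lt _)
  case one =>
    exact (realize_relabel_domToInterpEquiv (b := fun _ => id) (u := fun _ => u) σ
      (T.rel LOneRel.one) fun _ => rfl).trans (he.realize_rel LOneRel.one _)

/-- The composition of interpretations of string structures, defining `(S(x)^I)^I'` in `S(x)`. -/
noncomputable def Interp.comp (I I' : Interp) : Interp :=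
  (I.toInterpretation.comp I'.toInterpretation).toInterp finProdFinEquiv

theorem Interp.Models.comp {I I' : Interp} (h : I.Models x y) (h' : I'.Models y z) :
    (I.comp I').Models x z := by
  obtain ⟨e, he⟩ := h.exists_isIso
  obtain ⟨e', he'⟩ := h'.exists_isIso
  exact (he.comp he').models_toInterp finProdFinEquiv

end StringStructures

theorem exists_computable_monotone_ge {h : ℕ → ℕ} (hh : Computable h) :
    ∃ g : ℕ → ℕ, Computable g ∧ Monotone g ∧ h ≤ g := by
  have computable_step : Computable₂ fun (_ : ℕ) (p : ℕ × ℕ) => max p.2 (h (p.1 + 1)) :=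
    Primrec.nat_max.to_comp.comp (Computable.snd.comp Computable.snd)
      (hh.comp (Computable.succ.comp (Computable.fst.comp Computable.snd)))
  refine ⟨Nat.rec (h 0) fun n m => max m (h (n + 1)),
    Computable.nat_rec Computable.id (Computable.const (h 0)) computable_step,
    monotone_nat_of_le_succ fun n => le_max_left _ _, fun n => ?_⟩
  cases n with
  | zero => exact le_rfl
  | succ n => exact le_max_right _ _

theorem Honest.exists_computable_length_le {r : Str → Str} (hr : Honest r) :
    ∃ g : ℕ → ℕ, Computable g ∧ ∀ x : Str, x.length ≤ g (r x).length := by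
  obtain ⟨c, n₀, -, hlen⟩ := hr
  have computable_pow : Computable fun n : ℕ => n ^ c :=
    (Primrec₂.unpaired'.1 Nat.Primrec.pow).to_comp.comp Computable.id (Computable.const c)
  refine ⟨fun n => max n₀ (n ^ c), Primrec.nat_max.to_comp.comp (Computable.const n₀)
    computable_pow, fun x => ?_⟩
  rcases le_total n₀ x.length with hx | hx
  · exact le_max_of_le_right (hlen x hx)
  · exact le_max_of_le_left hx

theorem eventuallyDefinable_comp_general {κ κ' : Str → ℕ} {r r' : Str → Str} {f g : ℕ → ℕ}
    (hr : EventuallyDefinable κ r) (hr' : EventuallyDefinable κ' r')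
    (hf : Computable f) (hbound : ∀ x : Str, κ' (r x) ≤ f (κ x))
    (hg : Computable g) (hlen : ∀ x : Str, x.length ≤ g (r x).length) :
    EventuallyDefinable κ (r' ∘ r) := by
  obtain ⟨h, hh, I, hI⟩ := hr
  obtain ⟨h', hh', I', hI'⟩ := hr'
  obtain ⟨H', hH', H'_mono, h'_le⟩ := exists_computable_monotone_ge hh'
  obtain ⟨G, hG, G_mono, g_le⟩ := exists_computable_monotone_ge hg
  refine ⟨fun k => max (h k) (G (H' (f k)) + 1), Primrec.nat_max.to_comp.comp hh
    (Computable.succ.comp (hG.comp (hH'.comp hf))), I.comp I', fun x hx => ?_⟩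
  obtain ⟨hx, hGx⟩ := max_le_iff.1 hx
  refine (hI x hx).comp (hI' (r x) ?_)
  have length_image : H' (f (κ x)) < (r x).length :=
    G_mono.reflect_lt (hGx.trans ((hlen x).trans (g_le _)))
  calc h' (κ' (r x)) ≤ H' (κ' (r x)) := h'_le _
    _ ≤ H' (f (κ x)) := H'_mono (hbound x)
    _ ≤ (r x).length := length_image.le

/-- **Lemma 3.3**: if `r` is `κ`-eventually definable, `r'` is `κ'`-eventually
    definable, `κ' ∘ r ≤ f ∘ κ` for a computable `f`, and `r` is honest, then
    `r' ∘ r` is `κ`-eventually definable. -/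
theorem eventuallyDefinable_comp (κ κ' : Str → ℕ) (r r' : Str → Str) (f : ℕ → ℕ)
    (hκ : PolyTimeParam κ) (hκ' : PolyTimeParam κ')
    (hr : EventuallyDefinable κ r) (hr' : EventuallyDefinable κ' r')
    (hf : Computable f) (hbound : ∀ x : Str, κ' (r x) ≤ f (κ x))
    (hhonest : Honest r) :
    EventuallyDefinable κ (r' ∘ r) := by
  obtain ⟨g, hg, hlen⟩ := hhonest.exists_computable_length_le
  exact eventuallyDefinable_comp_general hr hr' hf hbound hg hlen

end PFW
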